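/- For a crossing perfect matching of 2k points with the same index-identification constraints, the number of equivalence classes of the 2k+1 index variables is at most k - 1. -/

import Mathlib

/-!
Read `E_0, …, E_n` as a walk whose `i`-th step goes from `E_i` to `E_{i+1}`. The identifications
say that step `f i` is step `i` traversed backwards, so the quotient is a connected graph in which
every pair of matched steps gives a single edge. A crossing `i < l < f i < f l` cuts the walk into
five pieces `A`, `B`, `C`, `D`, `E`, separated by the steps `i`, `l`, `f i`, `f l`. The endpoints
of those four steps are glued so that `A D C B E` is again a walk. Hence the quotient remains
connected without the two edges of the crossing, and a connected graph has at most one more vertex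
than it has edges.
-/

open scoped Finset

/-- The classes of the index variables `E_0, …, E_n` under the identifications imposed by a map `f`
on the `n` points. When `f` is an involution it encodes a matching, in which the fixed points of
`f` are the unmatched points. -/
def IndexClass {n : ℕ} (f : Fin n → Fin n) : Type :=
  Quotient (Relation.EqvGen.setoid
    (fun a b : Fin (n + 1) => ∃ i : Fin n,
      (a = i.castSucc ∧ b = (f i).succ) ∨ (a = i.succ ∧ b = (f i).castSucc)))

/-- The class of an index variable, seen as a vertex of the walk. -/
def IndexClass.mk {n : ℕ} (f : Fin n → Fin n) : Fin (n + 1) → IndexClass f :=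
  Quotient.mk _

theorem IndexClass.mk_surjective {n : ℕ} (f : Fin n → Fin n) :
    Function.Surjective (IndexClass.mk f) :=
  Quotient.mk_surjective

/-- The sequence of vertices `q` of a walk with `n` steps is folded by `f` if step `f i` is always
step `i` traversed backwards. -/
def IsFoldedBy {V : Type*} {n : ℕ} (q : Fin (n + 1) → V) (f : Fin n → Fin n) : Prop :=
  ∀ i, q i.castSucc = q (f i).succ ∧ q i.succ = q (f i).castSucc

theorem IndexClass.isFoldedBy_mk {n : ℕ} (f : Fin n → Fin n) :
    IsFoldedBy (IndexClass.mk f) f := fun i =>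
  ⟨Quotient.sound (.rel _ _ ⟨i, .inl ⟨rfl, rfl⟩⟩), Quotient.sound (.rel _ _ ⟨i, .inr ⟨rfl, rfl⟩⟩)⟩

theorem two_mul_card_image_le_card {α β : Type*} [DecidableEq β] {s : Finset α} {f : α → α}
    {g : α → β} (hmaps : ∀ x ∈ s, f x ∈ s) (hfree : ∀ x ∈ s, f x ≠ x)
    (hg : ∀ x ∈ s, g (f x) = g x) : 2 * #(s.image g) ≤ #s := by
  refine Finset.mul_card_image_le_card s 2 fun b hb => ?_
  obtain ⟨x, hx, rfl⟩ := Finset.mem_image.1 hb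
  exact Finset.one_lt_card.2 ⟨f x, by simp [hmaps x hx, hg x hx], x, by simp [hx], hfree x hx⟩

/-- The graph formed by the steps of the walk `q` with index in `S`. Steps that stay at a vertex
contribute no edge. -/
def stepGraph {V : Type*} {n : ℕ} (q : Fin (n + 1) → V) (S : Finset (Fin n)) : SimpleGraph V :=
  SimpleGraph.fromEdgeSet ((fun i : Fin n => s(q i.castSucc, q i.succ)) '' S)

section StepGraph

variable {V : Type*} {n : ℕ} {q : Fin (n + 1) → V} {f : Fin n → Fin n} {S : Finset (Fin n)}

theorem IsFoldedBy.two_mul_card_edgeSet_stepGraph_le (hq : IsFoldedBy q f)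
    (hf : Function.Injective f) (hS : ∀ j ∈ S, f j ∈ S) :
    2 * Nat.card (stepGraph q S).edgeSet ≤ #{j ∈ S | f j ≠ j} := by
  classical
  let edge : Fin n → Sym2 V := fun j => s(q j.castSucc, q j.succ)
  have edge_apply (j : Fin n) : edge (f j) = edge j := by
    simp only [edge, (hq j).1, (hq j).2, Sym2.eq_swap]
  have edgeSet_subset :
      (stepGraph q S).edgeSet ⊆ ({j ∈ S | f j ≠ j}.image edge : Finset (Sym2 V)) := by
    rw [stepGraph, SimpleGraph.edgeSet_fromEdgeSet]
    rintro _ ⟨⟨j, hj, rfl⟩, hloop⟩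
    have hfj : f j ≠ j := fun h => hloop (by simpa [h] using (hq j).1)
    exact Finset.mem_coe.2 (Finset.mem_image_of_mem edge (Finset.mem_filter.2 ⟨hj, hfj⟩))
  calc 2 * Nat.card (stepGraph q S).edgeSet
      ≤ 2 * #({j ∈ S | f j ≠ j}.image edge) := by
        gcongr
        exact (Nat.card_mono (Finset.finite_toSet _) edgeSet_subset).trans_eq
          (Set.ncard_coe_finset _)
    _ ≤ #{j ∈ S | f j ≠ j} :=
        two_mul_card_image_le_card
          (fun j hj => by simp_all [hf.ne_iff])
          (fun j hj => (Finset.mem_filter.1 hj).2) (fun j _ => edge_apply j)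

theorem stepGraph_reachable_of_mem {j : Fin n} (hj : j ∈ S) :
    (stepGraph q S).Reachable (q j.castSucc) (q j.succ) := by
  by_cases h : q j.castSucc = q j.succ
  · rw [h]
  · have hadj : (stepGraph q S).Adj (q j.castSucc) (q j.succ) :=
      (SimpleGraph.fromEdgeSet_adj _).2 ⟨⟨j, hj, rfl⟩, h⟩
    exact hadj.reachable

theorem stepGraph_reachable_of_le {a b : Fin (n + 1)} (hab : a ≤ b)
    (hS : ∀ j : Fin n, a ≤ j.castSucc → j.castSucc < b → j ∈ S) :
    (stepGraph q S).Reachable (q a) (q b) := by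
  induction b using Fin.induction with
  | zero => rw [Fin.le_zero_iff.1 hab]
  | succ b ih =>
    obtain rfl | hlt := hab.eq_or_lt
    · rfl
    · have hle : a ≤ b.castSucc := Fin.le_castSucc_iff.2 hlt
      exact (ih hle fun j haj hjb => hS j haj (hjb.trans b.castSucc_lt_succ)).trans
        (stepGraph_reachable_of_mem (hS b hle b.castSucc_lt_succ))

end StepGraph

/-- The four steps `i`, `l`, `f i`, `f l` of the two pairs that `f` makes with `i` and `l`. -/
def pairSteps {n : ℕ} (f : Fin n → Fin n) (i l : Fin n) : Finset (Fin n) :=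
  {i, l, f i, f l}

theorem apply_mem_compl_pairSteps {n : ℕ} {f : Fin n → Fin n} (hinv : Function.Involutive f)
    {i l j : Fin n} (hj : j ∈ (pairSteps f i l)ᶜ) : f j ∈ (pairSteps f i l)ᶜ := by
  simp only [pairSteps, Finset.mem_compl, Finset.mem_insert, Finset.mem_singleton] at hj ⊢
  grind [hinv j, hinv i, hinv l]

section Crossing

variable {n : ℕ} {f : Fin n → Fin n} {i l : Fin n}

theorem IsFoldedBy.connected_stepGraph_of_crossing {V : Type*} {q : Fin (n + 1) → V}
    (hq : IsFoldedBy q f) (hsurj : Function.Surjective q)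
    (hil : i < l) (hlf : l < f i) (hff : f i < f l) :
    (stepGraph q (pairSteps f i l)ᶜ).Connected := by
  let G := stepGraph q (pairSteps f i l)ᶜ
  have piece {a b : Fin (n + 1)} (hab : a ≤ b) (h : ∀ j : Fin n, a ≤ j.castSucc →
      j.castSucc < b → j ≠ i ∧ j ≠ l ∧ j ≠ f i ∧ j ≠ f l) : G.Reachable (q a) (q b) :=
    stepGraph_reachable_of_le hab fun j haj hjb => by simpa [pairSteps] using h j haj hjb
  have reach_D : G.Reachable (q i.castSucc) (q (f l).castSucc) := by
    rw [(hq i).1]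
    exact piece (by grind) (by grind)
  have reach_C : G.Reachable (q i.castSucc) (q (f i).castSucc) := by
    refine reach_D.trans ?_
    rw [← (hq l).2]
    exact piece (by grind) (by grind)
  have reach_B : G.Reachable (q i.castSucc) (q l.castSucc) := by
    refine reach_C.trans ?_
    rw [← (hq i).2]
    exact piece (by grind) (by grind)
  have reach (a : Fin (n + 1)) : G.Reachable (q i.castSucc) (q a) := by
    by_cases hA : a ≤ i.castSucc
    · exact (piece hA (by grind)).symm
    by_cases hB : a ≤ l.castSucc
    · exact reach_B.trans (piece hB (by grind)).symm
    by_cases hC : a ≤ (f i).castSucc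
    · exact reach_C.trans (piece hC (by grind)).symm
    by_cases hD : a ≤ (f l).castSucc
    · exact reach_D.trans (piece hD (by grind)).symm
    · rw [(hq l).1] at reach_B
      exact reach_B.trans (piece (by grind) (by grind))
  exact (SimpleGraph.connected_iff_exists_forall_reachable G).2
    ⟨q i.castSucc, hsurj.forall.2 reach⟩

theorem card_moved_compl_pairSteps_add_four (hinv : Function.Involutive f)
    (hil : i < l) (hlf : l < f i) (hff : f i < f l) :
    #{j ∈ (pairSteps f i l)ᶜ | f j ≠ j} + 4 = #{j | f j ≠ j} := by
  have card_pairSteps : #(pairSteps f i l) = 4 := by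
    simp [pairSteps, hil.ne, hlf.ne, hff.ne, (hil.trans hlf).ne, (hlf.trans hff).ne,
      (hil.trans (hlf.trans hff)).ne]
  have moved : pairSteps f i l ⊆ ({j | f j ≠ j} : Finset (Fin n)) := by
    intro j hj
    simp only [pairSteps, Finset.mem_insert, Finset.mem_singleton, Finset.mem_filter_univ] at hj ⊢
    grind [hinv i, hinv l]
  rw [← card_pairSteps, ← Finset.card_sdiff_add_card_eq_card moved]
  congr 2
  ext j
  simp [and_comm]

end Crossing

theorem card_classes_crossing_le_general {n : ℕ} {f : Fin n → Fin n} {i l : Fin n}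
    (hinv : Function.Involutive f) (hil : i < l) (hlf : l < f i) (hff : f i < f l) :
    2 * (Nat.card (IndexClass f) + 1) ≤ #{j | f j ≠ j} := by
  have card_edges := (IndexClass.isFoldedBy_mk f).two_mul_card_edgeSet_stepGraph_le
    hinv.injective fun _ => apply_mem_compl_pairSteps (i := i) (l := l) hinv
  have card_vertices := ((IndexClass.isFoldedBy_mk f).connected_stepGraph_of_crossing
    (IndexClass.mk_surjective f) hil hlf hff).card_vert_le_card_edgeSet_add_one
  have card_moved := card_moved_compl_pairSteps_add_four hinv hil hlf hff
  omega

/-- For a crossing perfect matching of `2k` points (encoded by a fixed-point-free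
involution `f`), the equivalence relation on the `2k+1` index variables generated by
the identifications `E_i ~ E_{f(i)+1}` and `E_{i+1} ~ E_{f(i)}` has at most `k - 1`
equivalence classes. -/
theorem card_classes_crossing_le (k : ℕ)
    (f : Fin (2 * k) → Fin (2 * k))
    (hinv : Function.Involutive f) (hfree : ∀ i, f i ≠ i)
    (hc : ∃ i l : Fin (2 * k),
      (i : ℕ) < (l : ℕ) ∧ (l : ℕ) < (f i : ℕ) ∧ (f i : ℕ) < (f l : ℕ)) :
    Nat.card (Quotient (Relation.EqvGen.setoid
      (fun a b : Fin (2 * k + 1) => ∃ i : Fin (2 * k),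
        (a = i.castSucc ∧ b = (f i).succ) ∨ (a = i.succ ∧ b = (f i).castSucc)))) ≤
      k - 1 := by
  obtain ⟨i, l, hil, hlf, hff⟩ := hc
  have card_classes : 2 * (Nat.card (IndexClass f) + 1) ≤ 2 * k :=
    (card_classes_crossing_le_general hinv hil hlf hff).trans (card_finset_fin_le _)
  exact Nat.le_sub_one_of_lt (Nat.le_of_mul_le_mul_left card_classes two_pos)
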